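/- Under Assumptions 1, 2, 3 and 4, the sequence Q_n is asymptotically efficient, i.e. R_Q(B) = lim_{n→∞} −(1/n) log E_{Q_n}[L_n² 1_{M_n∈B}] exists and equals 2 I_P(B), if and only if both I_Q^B(w*) = 0 (typicality condition) and −2 ∈ ∂I_Q^B(w*) (steepness condition) hold (Theorem 1). -/

import Mathlib

open MeasureTheory Filter Set Topology
open scoped ENNReal NNReal

/-- A sequence of measures satisfies the large deviation principle with rate function `I`:
upper bound over closed sets and lower bound over open sets, at exponential speed `n`. -/
def SatisfiesLDP {X : Type*} [TopologicalSpace X] [MeasurableSpace X]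
    (mu : ℕ → Measure X) (I : X → ℝ≥0∞) : Prop :=
  (∀ F : Set X, IsClosed F →
      limsup (fun n : ℕ => (((n : ℝ)⁻¹ : ℝ) : EReal) * ENNReal.log (mu n F)) atTop
        ≤ -(⨅ x ∈ F, (I x : EReal))) ∧
  (∀ G : Set X, IsOpen G →
      -(⨅ x ∈ G, (I x : EReal)) ≤
        liminf (fun n : ℕ => (((n : ℝ)⁻¹ : ℝ) : EReal) * ENNReal.log (mu n G)) atTop)

/-- A good rate function: lower semicontinuous with compact sublevel sets. -/
def IsGoodRate {X : Type*} [TopologicalSpace X] (I : X → ℝ≥0∞) : Prop :=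
  LowerSemicontinuous I ∧ ∀ c : ℝ≥0∞, c ≠ ⊤ → IsCompact {x | I x ≤ c}

/-- The subdifferential of an extended-real-valued function on ℝ at a point. -/
def Subdiff (f : ℝ → EReal) (x : ℝ) : Set ℝ :=
  {k | ∀ y : ℝ, f x + ((k * (y - x) : ℝ) : EReal) ≤ f y}

/-- `(1/n) log x` as an extended real number. -/
noncomputable def expRate (n : ℕ) (x : ℝ≥0∞) : EReal :=
  (((n : ℝ)⁻¹ : ℝ) : EReal) * ENNReal.log x

/-- The action `W_n = -(1/n) log (dP/dQ)`. -/
noncomputable def action {Λ : Type*} [MeasurableSpace Λ]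
    (P Q : Measure Λ) (n : ℕ) (x : Λ) : ℝ :=
  -(n : ℝ)⁻¹ * Real.log ((P.rnDeriv Q) x).toReal



theorem expRate_mono (n : ℕ) {u v : ℝ≥0∞} (h : u ≤ v) : expRate n u ≤ expRate n v := by
  unfold expRate
  exact mul_le_mul_of_nonneg_left (ENNReal.log_monotone h) (by exact_mod_cast (by positivity))

theorem expRate_exp (n : ℕ) (hn : n ≠ 0) (c : ℝ) :
    expRate n (ENNReal.ofReal (Real.exp (n * c))) = c := by
  unfold expRate
  rw [ENNReal.log_ofReal_of_pos (Real.exp_pos _), Real.log_exp, ← EReal.coe_mul]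
  congr 1
  field_simp

theorem le_of_expRate_lt (n : ℕ) (hn : n ≠ 0) {c : ℝ} {u : ℝ≥0∞} (h : expRate n u < c) :
    u ≤ ENNReal.ofReal (Real.exp (n * c)) := by
  by_contra h'
  have := expRate_mono n (not_le.1 h').le
  rw [expRate_exp n hn] at this
  exact absurd h (not_lt.2 this)

theorem ge_of_lt_expRate (n : ℕ) (hn : n ≠ 0) {c : ℝ} {u : ℝ≥0∞} (h : c < expRate n u) :
    ENNReal.ofReal (Real.exp (n * c)) ≤ u := by
  by_contra h'
  have := expRate_mono n (not_le.1 h').le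
  rw [expRate_exp n hn] at this
  exact absurd h (not_lt.2 this)

theorem ldp_upper {X : Type*} [TopologicalSpace X] [MeasurableSpace X]
    {mu : ℕ → Measure X} {I : X → ℝ≥0∞} (h : SatisfiesLDP mu I) {F : Set X} (hF : IsClosed F)
    {c c' : ℝ} (hc : ∀ x ∈ F, (c : EReal) ≤ I x) (hcc : c' < c) :
    ∀ᶠ n : ℕ in atTop, mu n F ≤ ENNReal.ofReal (Real.exp (n * (-c'))) := by
  have h1 := h.1 F hF
  have h2 : -(⨅ x ∈ F, (I x : EReal)) ≤ -(c : EReal) :=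
    EReal.neg_le_neg_iff.2 (le_iInf₂ hc)
  have h3 : limsup (fun n : ℕ => expRate n (mu n F)) atTop < ((-c' : ℝ) : EReal) := by
    refine lt_of_le_of_lt (h1.trans h2) ?_
    rw [← EReal.coe_neg]
    exact_mod_cast neg_lt_neg hcc
  filter_upwards [eventually_lt_of_limsup_lt h3, eventually_ne_atTop 0] with n hn hn0
  exact le_of_expRate_lt n hn0 hn

theorem ldp_lower {X : Type*} [TopologicalSpace X] [MeasurableSpace X]
    {mu : ℕ → Measure X} {I : X → ℝ≥0∞} (h : SatisfiesLDP mu I) {G : Set X} (hG : IsOpen G)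
    {x : X} (hx : x ∈ G) {c : ℝ} (hc : (I x : EReal) < c) :
    ∀ᶠ n : ℕ in atTop, ENNReal.ofReal (Real.exp (n * (-c))) ≤ mu n G := by
  have h1 := h.2 G hG
  have h2 : -(I x : EReal) ≤ -(⨅ x ∈ G, (I x : EReal)) :=
    EReal.neg_le_neg_iff.2 (iInf₂_le x hx)
  have h3 : ((-c : ℝ) : EReal) < liminf (fun n : ℕ => expRate n (mu n G)) atTop := by
    refine lt_of_lt_of_le ?_ (h2.trans h1)
    rw [EReal.coe_neg]
    exact EReal.neg_lt_neg_iff.2 hc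
  filter_upwards [eventually_lt_of_lt_liminf h3, eventually_ne_atTop 0] with n hn hn0
  exact ge_of_lt_expRate n hn0 hn

theorem action_measurable {Λ : Type*} [MeasurableSpace Λ] (P Q : Measure Λ) (n : ℕ) :
    Measurable (action P Q n) := by
  unfold action
  exact ((Measure.measurable_rnDeriv P Q).ennreal_toReal.log).const_mul _

theorem rn_ae {Λ : Type*} [MeasurableSpace Λ] (P Q : Measure Λ)
    [IsProbabilityMeasure P] [IsProbabilityMeasure Q] (h1 : P ≪ Q) (h2 : Q ≪ P)
    (n : ℕ) (hn : n ≠ 0) :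
    ∀ᵐ x ∂Q, P.rnDeriv Q x = ENNReal.ofReal (Real.exp (-(n * action P Q n x))) := by
  filter_upwards [Measure.rnDeriv_lt_top P Q, h2.ae_le (Measure.rnDeriv_pos h1)] with x hx hp
  have h3 : 0 < (P.rnDeriv Q x).toReal := ENNReal.toReal_pos hp.ne' hx.ne
  have h4 : -(n * action P Q n x) = Real.log (P.rnDeriv Q x).toReal := by
    unfold action
    have : (n : ℝ) ≠ 0 := by exact_mod_cast hn
    field_simp
  rw [h4, Real.exp_log h3, ENNReal.ofReal_toReal hx.ne]

theorem setLI_le {Λ : Type*} [MeasurableSpace Λ] (P Q : Measure Λ)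
    [IsProbabilityMeasure P] [IsProbabilityMeasure Q] (h1 : P ≪ Q) (h2 : Q ≪ P)
    (n : ℕ) (hn : n ≠ 0) (k : ℕ) {S : Set Λ} (hS : MeasurableSet S) {a : ℝ}
    (ha : ∀ x ∈ S, a ≤ action P Q n x) :
    ∫⁻ x in S, (P.rnDeriv Q x) ^ k ∂Q ≤ ENNReal.ofReal (Real.exp (n * (-(k * a)))) * Q S := by
  rw [← setLIntegral_const]
  apply setLIntegral_mono_ae' hS
  filter_upwards [rn_ae P Q h1 h2 n hn] with x hx hxS
  rw [hx, ← ENNReal.ofReal_pow (Real.exp_pos _).le, ← Real.exp_nat_mul]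
  apply ENNReal.ofReal_le_ofReal
  apply Real.exp_le_exp.2
  have := mul_le_mul_of_nonneg_left (ha x hxS) (by positivity : (0:ℝ) ≤ n * k)
  nlinarith

theorem le_setLI {Λ : Type*} [MeasurableSpace Λ] (P Q : Measure Λ)
    [IsProbabilityMeasure P] [IsProbabilityMeasure Q] (h1 : P ≪ Q) (h2 : Q ≪ P)
    (n : ℕ) (hn : n ≠ 0) (k : ℕ) {S : Set Λ} (hS : MeasurableSet S) {a : ℝ}
    (ha : ∀ x ∈ S, action P Q n x ≤ a) :
    ENNReal.ofReal (Real.exp (n * (-(k * a)))) * Q S ≤ ∫⁻ x in S, (P.rnDeriv Q x) ^ k ∂Q := by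
  rw [← setLIntegral_const]
  apply setLIntegral_mono_ae' hS
  filter_upwards [rn_ae P Q h1 h2 n hn] with x hx hxS
  rw [hx, ← ENNReal.ofReal_pow (Real.exp_pos _).le, ← Real.exp_nat_mul]
  apply ENNReal.ofReal_le_ofReal
  apply Real.exp_le_exp.2
  have := mul_le_mul_of_nonneg_left (ha x hxS) (by positivity : (0:ℝ) ≤ n * k)
  nlinarith

theorem setLI_tail {Λ : Type*} [MeasurableSpace Λ] (P Q : Measure Λ)
    [IsProbabilityMeasure P] [IsProbabilityMeasure Q] (h1 : P ≪ Q) (h2 : Q ≪ P)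
    (n : ℕ) (hn : n ≠ 0) {S : Set Λ} (hS : MeasurableSet S) {K δ : ℝ} (hδ : 0 < δ)
    (ha : ∀ x ∈ S, action P Q n x ≤ -K) :
    ∫⁻ x in S, (P.rnDeriv Q x) ^ 2 ∂Q ≤
      ENNReal.ofReal (Real.exp (n * (-(δ * K)))) *
        ∫⁻ x in S, (P.rnDeriv Q x) ^ ((2:ℝ) + δ) ∂Q := by
  rw [← lintegral_const_mul _ ((Measure.measurable_rnDeriv P Q).pow_const _)]
  apply setLIntegral_mono_ae' hS
  filter_upwards [rn_ae P Q h1 h2 n hn] with x hx hxS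
  rw [hx, ← ENNReal.ofReal_pow (Real.exp_pos _).le, ← Real.exp_nat_mul,
    ENNReal.ofReal_rpow_of_pos (Real.exp_pos _), ← Real.exp_mul,
    ← ENNReal.ofReal_mul (Real.exp_pos _).le, ← Real.exp_add]
  apply ENNReal.ofReal_le_ofReal
  apply Real.exp_le_exp.2
  have := mul_le_mul_of_nonneg_left (ha x hxS) (by positivity : (0:ℝ) ≤ n * δ)
  push_cast
  nlinarith

theorem P_eq {Λ : Type*} [MeasurableSpace Λ] (P Q : Measure Λ)
    [IsProbabilityMeasure P] [IsProbabilityMeasure Q] (h1 : P ≪ Q) (S : Set Λ) :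
    P S = ∫⁻ x in S, (P.rnDeriv Q x) ^ 1 ∂Q := by
  simp only [pow_one]
  exact (Measure.setLIntegral_rnDeriv h1 S).symm

theorem lsc_real {X : Type*} [PseudoMetricSpace X] {I : X → ℝ≥0∞} (h : LowerSemicontinuous I)
    {x : X} {c : ℝ} (hc : (c : EReal) < I x) {g : ℝ} (hg : 0 < g) :
    ∃ r > 0, r ≤ g ∧ ∀ y ∈ Metric.closedBall x r, (c : EReal) ≤ I y := by
  have h' : LowerSemicontinuous (fun x => (I x : EReal)) :=
    continuous_coe_ennreal_ereal.comp_lowerSemicontinuous h EReal.coe_ennreal_strictMono.monotone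
  obtain ⟨e, he, hb⟩ := Metric.eventually_nhds_iff_ball.1 (h' x c hc)
  refine ⟨min (e/2) g, by positivity, min_le_right _ _, fun y hy => (hb y ?_).le⟩
  have := Metric.mem_closedBall.1 hy
  have h2 := min_le_left (e/2) g
  rw [Metric.mem_ball]; linarith

theorem exp_absurd {a b : ℝ} (hab : b < a)
    (h : ∃ᶠ n : ℕ in atTop, ENNReal.ofReal (Real.exp (n * a)) ≤ ENNReal.ofReal (Real.exp (n * b))) :
    False := by
  obtain ⟨n, hn, hn0⟩ := (h.and_eventually (eventually_gt_atTop 0)).exists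
  rw [ENNReal.ofReal_le_ofReal_iff (Real.exp_pos _).le, Real.exp_le_exp] at hn
  have : (0:ℝ) < n := by exact_mod_cast hn0
  nlinarith

theorem ofexp_mul (n : ℕ) (a b : ℝ) : ENNReal.ofReal (Real.exp (n * a)) *
    ENNReal.ofReal (Real.exp (n * b)) = ENNReal.ofReal (Real.exp (n * (a + b))) := by
  rw [← ENNReal.ofReal_mul (Real.exp_pos _).le, ← Real.exp_add, mul_add]

theorem sum_bound {u : ℕ → ℝ≥0∞} {N : ℕ} {c c' : ℝ} (hc : c < c')
    (h : ∀ᶠ n : ℕ in atTop, u n ≤ N * ENNReal.ofReal (Real.exp (n * c))) :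
    ∀ᶠ n : ℕ in atTop, u n ≤ ENNReal.ofReal (Real.exp (n * c')) := by
  have h1 : Tendsto (fun n : ℕ => Real.exp (n * (c' - c))) atTop atTop :=
    Real.tendsto_exp_atTop.comp
      (tendsto_natCast_atTop_atTop.atTop_mul_const (sub_pos.2 hc))
  filter_upwards [h, h1.eventually_ge_atTop (N : ℝ)] with n hn hN
  refine hn.trans ?_
  rw [show c' = (c' - c) + c by ring, ← ofexp_mul]
  gcongr
  rw [← ENNReal.ofReal_natCast]
  exact ENNReal.ofReal_le_ofReal hN

theorem ennreal_coe_eq {x : ℝ≥0∞} (h : x ≠ ⊤) : (x : EReal) = ((x.toReal : ℝ) : EReal) := by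
  lift x to ℝ≥0 using h
  rfl

theorem lintegral_biUnion_fs_le {α : Type*} [MeasurableSpace α] (μ : Measure α) (f : α → ℝ≥0∞)
    (s : Finset ℕ) (S : ℕ → Set α) :
    ∫⁻ x in ⋃ i ∈ s, S i, f x ∂μ ≤ ∑ i ∈ s, ∫⁻ x in S i, f x ∂μ := by
  classical
  induction s using Finset.induction_on with
  | empty => simp
  | insert a s ha ih =>
    rw [Finset.sum_insert ha, Finset.set_biUnion_insert]
    exact (lintegral_union_le _ _ _).trans (add_le_add le_rfl ih)

theorem factD {D : ℕ} {Λ : ℕ → Type*} [∀ n, MeasurableSpace (Λ n)]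
    (P Q : ∀ n, Measure (Λ n))
    [∀ n, IsProbabilityMeasure (P n)] [∀ n, IsProbabilityMeasure (Q n)]
    (habs : ∀ n, P n ≪ Q n ∧ Q n ≪ P n)
    (M : ∀ n, Λ n → (Fin D → ℝ)) (hM : ∀ n, Measurable (M n))
    (J_P J_Q : (Fin D → ℝ) × ℝ → ℝ≥0∞)
    (hLDP_P : SatisfiesLDP (fun n => (P n).map (fun x => (M n x, action (P n) (Q n) n x))) J_P)
    (hLDP_Q : SatisfiesLDP (fun n => (Q n).map (fun x => (M n x, action (P n) (Q n) n x))) J_Q)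
    (hlsc : LowerSemicontinuous J_Q) (m : Fin D → ℝ) (w p : ℝ)
    (hp : (J_P (m, w) : EReal) = p) : (J_Q (m, w) : EReal) ≤ ((p - w : ℝ) : EReal) := by
  by_contra hcon
  obtain ⟨c, hc1, hc2⟩ := EReal.exists_between_coe_real (not_le.1 hcon)
  have hc1' : p - w < c := by exact_mod_cast hc1
  set g := c - (p - w) with hg
  have hg0 : 0 < g := by linarith
  obtain ⟨r, hr, hrg, hball⟩ := lsc_real hlsc hc2 (by positivity : 0 < g / 4)
  have hU := ldp_upper hLDP_Q Metric.isClosed_closedBall hball (by linarith : c - g / 4 < c)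
  have hL := ldp_lower hLDP_P Metric.isOpen_ball (Metric.mem_ball_self hr)
    (by rw [hp]; exact_mod_cast (by linarith) : (J_P (m, w) : EReal) < ((p + g / 4 : ℝ) : EReal))
  refine exp_absurd (a := -(p + g / 4)) (b := -(w - r) + -(c - g / 4)) (by linarith) ?_
  refine Eventually.frequently ?_
  filter_upwards [hU, hL, eventually_ne_atTop 0] with n hU hL hn
  have hmeas : Measurable (fun x => (M n x, action (P n) (Q n) n x)) :=
    (hM n).prodMk (action_measurable _ _ _)
  refine hL.trans ?_
  rw [Measure.map_apply hmeas Metric.isOpen_ball.measurableSet, P_eq (P n) (Q n) (habs n).1]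
  refine (setLI_le (P n) (Q n) (habs n).1 (habs n).2 n hn 1
    (hmeas Metric.isOpen_ball.measurableSet) (a := w - r) ?_).trans ?_
  · intro x hx
    have h1 : max (dist (M n x) m) (dist (action (P n) (Q n) n x) w) < r := hx
    have h2 := (max_lt_iff.1 h1).2
    rw [Real.dist_eq, abs_lt] at h2
    linarith
  · rw [← ofexp_mul]
    simp only [Nat.cast_one, one_mul]
    gcongr
    refine le_trans ?_ hU
    rw [Measure.map_apply hmeas Metric.isClosed_closedBall.measurableSet]
    exact measure_mono (preimage_mono Metric.ball_subset_closedBall)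

theorem factC {D : ℕ} {Λ : ℕ → Type*} [∀ n, MeasurableSpace (Λ n)]
    (P Q : ∀ n, Measure (Λ n))
    [∀ n, IsProbabilityMeasure (P n)] [∀ n, IsProbabilityMeasure (Q n)]
    (habs : ∀ n, P n ≪ Q n ∧ Q n ≪ P n)
    (M : ∀ n, Λ n → (Fin D → ℝ)) (hM : ∀ n, Measurable (M n))
    (I_P : (Fin D → ℝ) → ℝ≥0∞)
    (hLDP_M : SatisfiesLDP (fun n => (P n).map (M n)) I_P)
    (J_Q : (Fin D → ℝ) × ℝ → ℝ≥0∞)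
    (hLDP_Q : SatisfiesLDP (fun n => (Q n).map (fun x => (M n x, action (P n) (Q n) n x))) J_Q)
    (hlsc : LowerSemicontinuous I_P) (m : Fin D → ℝ) (w p : ℝ)
    (hp : (J_Q (m, w) : EReal) ≤ p) : (I_P m : EReal) ≤ ((p + w : ℝ) : EReal) := by
  by_contra hcon
  obtain ⟨c, hc1, hc2⟩ := EReal.exists_between_coe_real (not_le.1 hcon)
  have hc1' : p + w < c := by exact_mod_cast hc1
  set g := c - (p + w) with hg
  have hg0 : 0 < g := by linarith
  obtain ⟨r, hr, hrg, hball⟩ := lsc_real hlsc hc2 (by positivity : 0 < g / 4)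
  have hU := ldp_upper hLDP_M Metric.isClosed_closedBall hball (by linarith : c - g / 4 < c)
  have hL := ldp_lower hLDP_Q Metric.isOpen_ball (Metric.mem_ball_self hr)
    (lt_of_le_of_lt hp (by exact_mod_cast (by linarith)) :
      (J_Q (m, w) : EReal) < ((p + g / 4 : ℝ) : EReal))
  refine exp_absurd (a := -(w + r) + -(p + g / 4)) (b := -(c - g / 4)) (by linarith) ?_
  refine Eventually.frequently ?_
  filter_upwards [hU, hL, eventually_ne_atTop 0] with n hU hL hn
  have hmeas : Measurable (fun x => (M n x, action (P n) (Q n) n x)) :=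
    (hM n).prodMk (action_measurable _ _ _)
  refine le_trans ?_ hU
  rw [Measure.map_apply (hM n) Metric.isClosed_closedBall.measurableSet]
  have hsub : (fun x => (M n x, action (P n) (Q n) n x)) ⁻¹' (Metric.ball (m, w) r) ⊆
      M n ⁻¹' (Metric.closedBall m r) := by
    intro x hx
    have h1 : max (dist (M n x) m) (dist (action (P n) (Q n) n x) w) < r := hx
    exact ((max_lt_iff.1 h1).1).le
  refine le_trans ?_ (measure_mono hsub)
  rw [P_eq (P n) (Q n) (habs n).1]
  refine le_trans ?_ (le_setLI (P n) (Q n) (habs n).1 (habs n).2 n hn 1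
    (hmeas Metric.isOpen_ball.measurableSet) (a := w + r) ?_)
  · rw [← ofexp_mul]
    simp only [Nat.cast_one, one_mul]
    gcongr
    rwa [Measure.map_apply hmeas Metric.isOpen_ball.measurableSet] at hL
  · intro x hx
    have h1 : max (dist (M n x) m) (dist (action (P n) (Q n) n x) w) < r := hx
    have h2 := (max_lt_iff.1 h1).2
    rw [Real.dist_eq, abs_lt] at h2
    linarith

theorem factE {D : ℕ} {Λ : ℕ → Type*} [∀ n, MeasurableSpace (Λ n)]
    (P Q : ∀ n, Measure (Λ n))
    (M : ∀ n, Λ n → (Fin D → ℝ)) (hM : ∀ n, Measurable (M n))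
    (B : Set (Fin D → ℝ))
    (I_P : (Fin D → ℝ) → ℝ≥0∞)
    (hLDP_M : SatisfiesLDP (fun n => (P n).map (M n)) I_P)
    (J_P : (Fin D → ℝ) × ℝ → ℝ≥0∞)
    (hLDP_P : SatisfiesLDP (fun n => (P n).map (fun x => (M n x, action (P n) (Q n) n x))) J_P)
    (hJPgood : IsGoodRate J_P) (I : ℝ)
    (hIPB : (⨅ m ∈ interior B, I_P m) = ENNReal.ofReal I) (hI0 : 0 ≤ I) :
    ∃ m0 ∈ closure B, ∃ w0 p : ℝ, (J_P (m0, w0) : EReal) = p ∧ p ≤ I := by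
  have hcl : IsClosed (closure B ×ˢ (univ : Set ℝ)) := isClosed_closure.prod isClosed_univ
  -- points with value below I + e
  have key : ∀ e : ℝ, 0 < e → ∃ q ∈ closure B ×ˢ (univ : Set ℝ),
      (J_P q : EReal) < ((I + e : ℝ) : EReal) := by
    intro e he
    by_contra! hcon
    have hU := ldp_upper hLDP_P hcl hcon (by linarith : I + e / 2 < I + e)
    have : (⨅ m ∈ interior B, I_P m) < ENNReal.ofReal (I + e / 4) := by
      rw [hIPB]; exact (ENNReal.ofReal_lt_ofReal_iff (by linarith)).2 (by linarith)
    obtain ⟨m, hm, hlt⟩ := by simpa only [iInf_lt_iff, exists_prop] using this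
    have hlt' : (I_P m : EReal) < ((I + e / 4 : ℝ) : EReal) := by
      have h := EReal.coe_ennreal_lt_coe_ennreal_iff.2 hlt
      rwa [EReal.coe_ennreal_ofReal, max_eq_left (by linarith)] at h
    have hL := ldp_lower hLDP_M isOpen_interior hm hlt'
    refine exp_absurd (a := -(I + e / 4)) (b := -(I + e / 2)) (by linarith) ?_
    refine Eventually.frequently ?_
    filter_upwards [hU, hL] with n hU hL
    refine hL.trans (le_trans ?_ hU)
    have hmeas : Measurable (fun x => (M n x, action (P n) (Q n) n x)) :=
      (hM n).prodMk (action_measurable _ _ _)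
    rw [Measure.map_apply hmeas hcl.measurableSet,
      Measure.map_apply (hM n) isOpen_interior.measurableSet]
    exact measure_mono fun x hx => ⟨interior_subset_closure hx, trivial⟩
  have hconv : ∀ q e, 0 < e → (J_P q : EReal) < ((I + e : ℝ) : EReal) →
      J_P q < ENNReal.ofReal (I + e) := by
    intro q e he h
    rw [← EReal.coe_ennreal_lt_coe_ennreal_iff, EReal.coe_ennreal_ofReal,
      max_eq_left (by linarith)]
    exact h
  set K := {q | J_P q ≤ ENNReal.ofReal (I + 1)} ∩ (closure B ×ˢ (univ : Set ℝ)) with hK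
  have hKc : IsCompact K := (hJPgood.2 _ ENNReal.ofReal_ne_top).inter_right hcl
  obtain ⟨q1, hq1, hq1'⟩ := key 1 one_pos
  have hKne : K.Nonempty := ⟨q1, (hconv q1 1 one_pos hq1').le, hq1⟩
  obtain ⟨q, hq, hmin⟩ :=
    (hJPgood.1.lowerSemicontinuousOn K).exists_isMinOn hKne hKc
  have hfin : J_P q ≠ ⊤ := ne_top_of_le_ne_top ENNReal.ofReal_ne_top hq.1
  refine ⟨q.1, hq.2.1, q.2, (J_P q).toReal, (ennreal_coe_eq hfin), ?_⟩
  refine le_of_forall_pos_lt_add fun e he => ?_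
  obtain ⟨q2, hq2, hq2'⟩ := key (min e 1) (by positivity)
  have h2 := hconv q2 _ (by positivity) hq2'
  have h3 : J_P q ≤ J_P q2 := hmin ⟨(h2.trans_le (ENNReal.ofReal_le_ofReal
    (by linarith [min_le_right e 1]))).le, hq2⟩
  have h4 := (ENNReal.lt_ofReal_iff_toReal_lt hfin).1 (h3.trans_lt h2)
  linarith [min_le_left e 1]

theorem factA {D : ℕ} {Λ : ℕ → Type*} [∀ n, MeasurableSpace (Λ n)]
    (P Q : ∀ n, Measure (Λ n))
    [∀ n, IsProbabilityMeasure (P n)] [∀ n, IsProbabilityMeasure (Q n)]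
    (habs : ∀ n, P n ≪ Q n ∧ Q n ≪ P n)
    (M : ∀ n, Λ n → (Fin D → ℝ)) (hM : ∀ n, Measurable (M n))
    (B : Set (Fin D → ℝ))
    (J_Q : (Fin D → ℝ) × ℝ → ℝ≥0∞)
    (hLDP_Q : SatisfiesLDP (fun n => (Q n).map (fun x => (M n x, action (P n) (Q n) n x))) J_Q)
    (m : Fin D → ℝ) (hm : m ∈ interior B) (w c : ℝ)
    (hc : ((2 * w : ℝ) : EReal) + (J_Q (m, w) : EReal) < c) :
    ∀ᶠ n : ℕ in atTop, ENNReal.ofReal (Real.exp (n * (-c))) ≤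
      ∫⁻ x in {x | M n x ∈ B}, ((P n).rnDeriv (Q n) x) ^ 2 ∂(Q n) := by
  have hfin : J_Q (m, w) ≠ ⊤ := by
    intro h; rw [h, EReal.coe_ennreal_top, EReal.coe_add_top] at hc; exact not_top_lt hc
  set j := (J_Q (m, w)).toReal
  have hj : (J_Q (m, w) : EReal) = j := (ennreal_coe_eq hfin)
  have hc' : 2 * w + j < c := by rw [hj] at hc; exact_mod_cast hc
  set r := (c - 2 * w - j) / 4 with hr
  have hopen : IsOpen (interior B ×ˢ Iio (w + r)) := isOpen_interior.prod isOpen_Iio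
  have hL := ldp_lower hLDP_Q hopen (x := (m, w)) ⟨hm, by simp only [mem_Iio]; linarith⟩
    (by rw [hj]; exact_mod_cast (by linarith) :
      (J_Q (m, w) : EReal) < ((c - 2 * (w + r) : ℝ) : EReal))
  filter_upwards [hL, eventually_ne_atTop 0] with n hL hn
  have hmeas : Measurable (fun x => (M n x, action (P n) (Q n) n x)) :=
    (hM n).prodMk (action_measurable _ _ _)
  rw [Measure.map_apply hmeas hopen.measurableSet] at hL
  have hsub : (fun x => (M n x, action (P n) (Q n) n x)) ⁻¹' (interior B ×ˢ Iio (w + r)) ⊆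
      {x | M n x ∈ B} := fun x hx => (interior_subset hx.1 : M n x ∈ B)
  refine le_trans ?_ (lintegral_mono_set hsub)
  refine le_trans ?_ (le_setLI (P n) (Q n) (habs n).1 (habs n).2 n hn 2
    (hmeas hopen.measurableSet) (a := w + r) (fun x hx => (mem_Iio.1 hx.2).le))
  rw [show -c = -((2 : ℕ) * (w + r)) + -(c - 2 * (w + r)) by push_cast; ring, ← ofexp_mul]
  gcongr

theorem factB {D : ℕ} {Λ : ℕ → Type*} [∀ n, MeasurableSpace (Λ n)]
    (P Q : ∀ n, Measure (Λ n))
    [∀ n, IsProbabilityMeasure (P n)] [∀ n, IsProbabilityMeasure (Q n)]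
    (habs : ∀ n, P n ≪ Q n ∧ Q n ≪ P n)
    (M : ∀ n, Λ n → (Fin D → ℝ)) (hM : ∀ n, Measurable (M n))
    (B : Set (Fin D → ℝ))
    (δ : ℝ) (hδ : 0 < δ)
    (hmom : limsup (fun n : ℕ => expRate n
        (∫⁻ x in {x | M n x ∈ closure B},
          ((P n).rnDeriv (Q n) x) ^ ((2 : ℝ) + δ) ∂(Q n))) atTop < ⊤)
    (J_Q : (Fin D → ℝ) × ℝ → ℝ≥0∞)
    (hLDP_Q : SatisfiesLDP (fun n => (Q n).map (fun x => (M n x, action (P n) (Q n) n x))) J_Q)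
    (v c : ℝ) (hcv : c < v)
    (hv : ∀ m ∈ closure B, ∀ w : ℝ, ((v - 2 * w : ℝ) : EReal) ≤ (J_Q (m, w) : EReal)) :
    ∀ᶠ n : ℕ in atTop, ∫⁻ x in {x | M n x ∈ B}, ((P n).rnDeriv (Q n) x) ^ 2 ∂(Q n) ≤
      ENNReal.ofReal (Real.exp (n * (-c))) := by
  obtain ⟨C, hC1, -⟩ := EReal.exists_between_coe_real hmom
  set c1 := (c + v) / 2 with hc1
  set ε := (v - c) / 8 with hε
  have hε0 : 0 < ε := by simp only [hε]; linarith
  set K := (C + c1) / δ with hKdef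
  have hK : C - δ * K = -c1 := by rw [hKdef]; field_simp; ring
  obtain ⟨N, hN⟩ := exists_nat_ge ((c1 / 2 + K) / ε)
  have hN' : c1 / 2 ≤ -K + N * ε := by
    rw [div_le_iff₀ hε0] at hN; linarith
  -- slabs
  have hslab : ∀ i : ℕ, ∀ᶠ n : ℕ in atTop,
      ∫⁻ x in {x | M n x ∈ closure B ∧ action (P n) (Q n) n x ∈ Icc (-K + i * ε) (-K + (i + 1) * ε)},
        ((P n).rnDeriv (Q n) x) ^ 2 ∂(Q n) ≤ ENNReal.ofReal (Real.exp (n * (-c1))) := by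
    intro i
    set a := -K + i * ε with ha
    have hcl : IsClosed (closure B ×ˢ Icc a (-K + (i + 1) * ε)) := isClosed_closure.prod isClosed_Icc
    have hU := ldp_upper hLDP_Q hcl (c := v - 2 * (a + ε)) (c' := c1 - 2 * a) (by
      rintro ⟨m, w⟩ ⟨hm, hw⟩
      refine le_trans ?_ (hv m hm w)
      have h1 : w ≤ -K + (i + 1) * ε := hw.2
      exact_mod_cast (by rw [ha]; linarith)) (by simp only [hc1, hε]; linarith)
    filter_upwards [hU, eventually_ne_atTop 0] with n hU hn
    have hmeas : Measurable (fun x => (M n x, action (P n) (Q n) n x)) :=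
      (hM n).prodMk (action_measurable _ _ _)
    rw [Measure.map_apply hmeas hcl.measurableSet] at hU
    refine (setLI_le (P n) (Q n) (habs n).1 (habs n).2 n hn 2
      (hmeas hcl.measurableSet) (a := a) (fun x hx => hx.2.1)).trans ?_
    rw [show -c1 = -((2 : ℕ) * a) + -(c1 - 2 * a) by push_cast; ring, ← ofexp_mul]
    gcongr
  have hall := (Finset.range N).eventually_all.2 (fun i _ => hslab i)
  refine sum_bound (N := N + 2) (c := -c1) (by simp only [hc1]; linarith) ?_
  filter_upwards [hall, eventually_lt_of_limsup_lt hC1, eventually_ne_atTop 0] with n hall hC hn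
  have hC' := le_of_expRate_lt n hn hC
  have hBm : MeasurableSet {x | M n x ∈ closure B} := hM n isClosed_closure.measurableSet
  have ham := action_measurable (P n) (Q n) n
  have hsub : {x | M n x ∈ B} ⊆
      ({x | M n x ∈ closure B ∧ action (P n) (Q n) n x ≤ -K} ∪
        {x | M n x ∈ closure B ∧ c1 / 2 ≤ action (P n) (Q n) n x}) ∪
      ⋃ i ∈ Finset.range N, {x | M n x ∈ closure B ∧
        action (P n) (Q n) n x ∈ Icc (-K + i * ε) (-K + (i + 1) * ε)} := by
    intro x hx
    have hx' : M n x ∈ closure B := subset_closure hx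
    by_cases h1 : action (P n) (Q n) n x ≤ -K
    · exact Or.inl (Or.inl ⟨hx', h1⟩)
    by_cases h2 : c1 / 2 ≤ action (P n) (Q n) n x
    · exact Or.inl (Or.inr ⟨hx', h2⟩)
    right
    push Not at h1 h2
    set t := (action (P n) (Q n) n x + K) / ε with ht
    have ht0 : 0 ≤ t := div_nonneg (by linarith) hε0.le
    have htε : t * ε = action (P n) (Q n) n x + K := by rw [ht]; field_simp
    have hf1 := Nat.floor_le ht0
    have hf2 := Nat.lt_floor_add_one t
    simp only [mem_iUnion]
    refine ⟨⌊t⌋₊, Finset.mem_range.2 ((Nat.floor_lt ht0).2 ?_), hx', ?_, ?_⟩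
    · rw [ht, div_lt_iff₀ hε0]; linarith
    · nlinarith
    · nlinarith
  refine (lintegral_mono_set hsub).trans ?_
  refine (lintegral_union_le _ _ _).trans ?_
  rw [show (((N + 2 : ℕ) : ℝ≥0∞)) = 1 + 1 + N by push_cast; ring, add_mul, add_mul, one_mul]
  refine add_le_add ((lintegral_union_le _ _ _).trans (add_le_add ?_ ?_)) ?_
  · have hS : MeasurableSet {x | M n x ∈ closure B ∧ action (P n) (Q n) n x ≤ -K} :=
      hBm.inter (ham measurableSet_Iic)
    refine (setLI_tail (P n) (Q n) (habs n).1 (habs n).2 n hn hS hδ (fun x hx => hx.2)).trans ?_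
    rw [show -c1 = -(δ * K) + C by linarith, ← ofexp_mul]
    gcongr
    refine (lintegral_mono_set ?_).trans hC'
    exact fun x hx => hx.1
  · have hS : MeasurableSet {x | M n x ∈ closure B ∧ c1 / 2 ≤ action (P n) (Q n) n x} :=
      hBm.inter (ham measurableSet_Ici)
    refine (setLI_le (P n) (Q n) (habs n).1 (habs n).2 n hn 2 hS (fun x hx => hx.2)).trans ?_
    rw [show -((2 : ℕ) * (c1 / 2)) = -c1 by push_cast; ring]
    exact mul_le_of_le_one_right' prob_le_one
  · refine (lintegral_biUnion_fs_le _ _ _ _).trans ?_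
    refine (Finset.sum_le_card_nsmul _ _ _ hall).trans ?_
    simp

/-- Theorem 1: under Assumptions 1-4, `Q_n` is asymptotically efficient (i.e. `R_Q(B)` exists
and equals `2 I_P(B)`) if and only if `I_Q^B(w*) = 0` (typicality) and
`-2 ∈ ∂I_Q^B(w*)` (steepness). -/
theorem asymptotic_efficiency_characterization
    {D : ℕ} {Λ : ℕ → Type*} [∀ n, MeasurableSpace (Λ n)]
    (P Q : ∀ n, Measure (Λ n))
    [∀ n, IsProbabilityMeasure (P n)] [∀ n, IsProbabilityMeasure (Q n)]
    (habs : ∀ n, P n ≪ Q n ∧ Q n ≪ P n)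
    (M : ∀ n, Λ n → (Fin D → ℝ)) (hM : ∀ n, Measurable (M n))
    (B : Set (Fin D → ℝ)) (hB : MeasurableSet B)
    (I_P : (Fin D → ℝ) → ℝ≥0∞)
    (hLDP_M : SatisfiesLDP (fun n => (P n).map (M n)) I_P)
    (hIPgood : IsGoodRate I_P)
    (hIPB : (⨅ m ∈ interior B, I_P m) = ⨅ m ∈ closure B, I_P m)
    (hIPBfin : (⨅ m ∈ closure B, I_P m) ≠ ⊤)
    (δ : ℝ) (hδ : 0 < δ)
    (hmom : limsup (fun n : ℕ => expRate n
        (∫⁻ x in {x | M n x ∈ closure B},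
          ((P n).rnDeriv (Q n) x) ^ ((2 : ℝ) + δ) ∂(Q n))) atTop < ⊤)
    (J_P J_Q : (Fin D → ℝ) × ℝ → ℝ≥0∞)
    (hLDP_P : SatisfiesLDP (fun n => (P n).map (fun x => (M n x, action (P n) (Q n) n x))) J_P)
    (hLDP_Q : SatisfiesLDP (fun n => (Q n).map (fun x => (M n x, action (P n) (Q n) n x))) J_Q)
    (hJPgood : IsGoodRate J_P) (hJQgood : IsGoodRate J_Q)
    (hdom : {p | J_P p ≠ ⊤} = {p | J_Q p ≠ ⊤})
    (hne : {p | J_P p ≠ ⊤}.Nonempty)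
    (hBgood : (⨅ m ∈ interior B, ⨅ w : ℝ, (((2 * w : ℝ) : EReal) + (J_Q (m, w) : EReal)))
      = ⨅ m ∈ closure B, ⨅ w : ℝ, (((2 * w : ℝ) : EReal) + (J_Q (m, w) : EReal)))
    (mstar : Fin D → ℝ) (wstar : ℝ)
    (hzero : J_Q (mstar, wstar) = 0)
    (huniq : ∀ p : (Fin D → ℝ) × ℝ, J_Q p = 0 → p = (mstar, wstar)) :
    Tendsto (fun n : ℕ => -expRate n (∫⁻ x in {x | M n x ∈ B}, ((P n).rnDeriv (Q n) x) ^ 2 ∂(Q n))) atTop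
        (𝓝 (2 * ⨅ m ∈ closure B, (I_P m : EReal)))
      ↔ ((⨅ m ∈ closure B, J_Q (m, wstar)) = 0 ∧
          (-2 : ℝ) ∈ Subdiff (fun w : ℝ => ((⨅ m ∈ closure B, J_Q (m, w)) : EReal)) wstar) := by
  obtain ⟨I, hI, hI0⟩ : ∃ I : ℝ, (⨅ m ∈ closure B, I_P m) = ENNReal.ofReal I ∧ 0 ≤ I :=
    ⟨_, (ENNReal.ofReal_toReal hIPBfin).symm, ENNReal.toReal_nonneg⟩
  have hIle : ∀ m ∈ closure B, (I : EReal) ≤ I_P m := by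
    intro m hm
    have h1 : ENNReal.ofReal I ≤ I_P m := hI ▸ iInf₂_le m hm
    have h := EReal.coe_ennreal_le_coe_ennreal_iff.2 h1
    rwa [EReal.coe_ennreal_ofReal, max_eq_left hI0] at h
  have hIE : (⨅ m ∈ closure B, (I_P m : EReal)) = I := by
    refine le_antisymm ?_ (le_iInf₂ hIle)
    refine le_of_forall_gt fun e he => ?_
    obtain ⟨e', he1, he2⟩ := EReal.exists_between_coe_real he
    have he1' : I < e' := by exact_mod_cast he1
    have : (⨅ m ∈ closure B, I_P m) < ENNReal.ofReal e' := by
      rw [hI]; exact (ENNReal.ofReal_lt_ofReal_iff (by linarith)).2 he1'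
    obtain ⟨m, hm, hlt⟩ := by simpa only [iInf_lt_iff, exists_prop] using this
    have h := EReal.coe_ennreal_lt_coe_ennreal_iff.2 hlt
    rw [EReal.coe_ennreal_ofReal, max_eq_left (by linarith)] at h
    exact (iInf₂_le m hm).trans_lt (h.trans he2)
  have h2I : 2 * (⨅ m ∈ closure B, (I_P m : EReal)) = ((2 * I : ℝ) : EReal) := by
    rw [hIE]; norm_cast
  rw [h2I]
  obtain ⟨m0, hm0, w0, p, hp, hpI⟩ := factE P Q M hM B I_P hLDP_M J_P hLDP_P hJPgood I
    (hIPB.trans hI) hI0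
  have hj0 := factD P Q habs M hM J_P J_Q hLDP_P hLDP_Q hJQgood.1 m0 w0 p hp
  have hjfin : J_Q (m0, w0) ≠ ⊤ := by
    intro h; rw [h, EReal.coe_ennreal_top] at hj0
    exact absurd (top_le_iff.1 hj0) (EReal.coe_ne_top _)
  set j := (J_Q (m0, w0)).toReal with hjdef
  have hj : (J_Q (m0, w0) : EReal) = j := ennreal_coe_eq hjfin
  have hj0' : j ≤ p - w0 := by rw [hj] at hj0; exact_mod_cast hj0
  have hjnn : 0 ≤ j := ENNReal.toReal_nonneg
  -- translation between forms of the inequality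
  have htr : ∀ (v w : ℝ) (x : ℝ≥0∞), (v : EReal) ≤ ((2 * w : ℝ) : EReal) + (x : EReal) →
      ((v - 2 * w : ℝ) : EReal) ≤ (x : EReal) := by
    intro v w x h
    by_cases hx : x = ⊤
    · rw [hx]; simp
    rw [ennreal_coe_eq hx] at h ⊢
    have : v ≤ 2 * w + x.toReal := by exact_mod_cast h
    exact_mod_cast (by linarith)
  constructor
  · intro hT
    have hV : ∀ m ∈ closure B, ∀ w : ℝ, ((2 * I : ℝ) : EReal) ≤
        ((2 * w : ℝ) : EReal) + (J_Q (m, w) : EReal) := by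
      have : ((2 * I : ℝ) : EReal) ≤ ⨅ m ∈ interior B, ⨅ w : ℝ,
          (((2 * w : ℝ) : EReal) + (J_Q (m, w) : EReal)) := by
        refine le_iInf₂ fun m hm => le_iInf fun w => ?_
        refine le_of_forall_gt fun e he => ?_
        obtain ⟨c, hc1, hc2⟩ := EReal.exists_between_coe_real he
        refine lt_of_le_of_lt ?_ hc2
        refine le_of_tendsto hT ?_
        filter_upwards [factA P Q habs M hM B J_Q hLDP_Q m hm w c hc1, eventually_ne_atTop 0]
          with n h hn
        have h := expRate_mono n h
        rw [expRate_exp n hn, EReal.coe_neg] at h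
        exact EReal.neg_le.1 h
      rw [hBgood] at this
      intro m hm w
      exact (this.trans (iInf₂_le m hm)).trans (iInf_le _ w)
    have h1 := htr _ _ _ (hV m0 hm0 w0)
    rw [hj] at h1
    have h1' : 2 * I - 2 * w0 ≤ j := by exact_mod_cast h1
    have hjz : j = 0 := by linarith
    have hJz : J_Q (m0, w0) = 0 := by
      rcases (ENNReal.toReal_eq_zero_iff _).1 hjz with h | h
      · exact h
      · exact absurd h hjfin
    have heq := huniq _ hJz
    have e1 : m0 = mstar := congrArg Prod.fst heq
    have e2 : w0 = wstar := congrArg Prod.snd heq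
    subst e1 e2
    refine ⟨le_antisymm ((iInf₂_le m0 hm0).trans hJz.le) bot_le, ?_⟩
    intro y
    have hle : (⨅ m ∈ closure B, (J_Q (m, w0) : EReal)) ≤ 0 :=
      (iInf₂_le m0 hm0).trans (by rw [hJz]; simp)
    refine (add_le_add hle le_rfl).trans ?_
    rw [zero_add]
    refine le_iInf₂ fun m hm => ?_
    refine le_trans ?_ (htr _ _ _ (hV m hm y))
    exact EReal.coe_le_coe_iff.2 (by linarith)
  · rintro ⟨hz, hs⟩
    have hv : ∀ m ∈ closure B, ∀ w : ℝ,
        ((2 * wstar - 2 * w : ℝ) : EReal) ≤ (J_Q (m, w) : EReal) := by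
      intro m hm w
      have h1 := hs w
      have h0 : (0 : EReal) ≤ ⨅ m ∈ closure B, (J_Q (m, wstar) : EReal) :=
        le_iInf₂ fun m _ => EReal.coe_ennreal_nonneg _
      have h2 := (add_le_add h0 le_rfl).trans (h1.trans (iInf₂_le m hm))
      rw [zero_add] at h2
      refine le_trans ?_ h2
      exact EReal.coe_le_coe_iff.2 (by linarith)
    have hnear : ∀ e : ℝ, 0 < e → ∃ m ∈ closure B, (J_Q (m, wstar) : EReal) < e := by
      intro e he
      have : (⨅ m ∈ closure B, J_Q (m, wstar)) < ENNReal.ofReal e := by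
        rw [hz]; exact ENNReal.ofReal_pos.2 he
      obtain ⟨m, hm, hlt⟩ := by simpa only [iInf_lt_iff, exists_prop] using this
      have h := EReal.coe_ennreal_lt_coe_ennreal_iff.2 hlt
      rw [EReal.coe_ennreal_ofReal, max_eq_left he.le] at h
      exact ⟨m, hm, h⟩
    have hIw : I ≤ wstar := by
      refine le_of_forall_pos_le_add fun e he => ?_
      obtain ⟨m, hm, h⟩ := hnear e he
      have h1 := (hIle m hm).trans
        (factC P Q habs M hM I_P hLDP_M J_Q hLDP_Q hIPgood.1 m wstar e h.le)
      have : I ≤ e + wstar := by exact_mod_cast h1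
      linarith
    have hwI : wstar ≤ I := by
      have h1 := hv m0 hm0 w0
      rw [hj] at h1
      have h1' : 2 * wstar - 2 * w0 ≤ j := by exact_mod_cast h1
      linarith
    have hIeq : I = wstar := le_antisymm hIw hwI
    rw [hIeq]
    refine tendsto_order.2 ⟨fun a ha => ?_, fun a ha => ?_⟩
    · obtain ⟨c, hc1, hc2⟩ := EReal.exists_between_coe_real ha
      have hc2' : c < 2 * wstar := by exact_mod_cast hc2
      filter_upwards [factB P Q habs M hM B δ hδ hmom J_Q hLDP_Q (2 * wstar) c hc2' hv,
        eventually_ne_atTop 0] with n h hn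
      have h := expRate_mono n h
      rw [expRate_exp n hn, EReal.coe_neg] at h
      exact hc1.trans_le (EReal.le_neg_of_le_neg h)
    · obtain ⟨c, hc1, hc2⟩ := EReal.exists_between_coe_real ha
      have hc1' : 2 * wstar < c := by exact_mod_cast hc1
      obtain ⟨m, hm, h⟩ := hnear (c - 2 * wstar) (by linarith)
      have hlt : (⨅ m ∈ interior B, ⨅ w : ℝ,
          (((2 * w : ℝ) : EReal) + (J_Q (m, w) : EReal))) < c := by
        rw [hBgood]
        refine (iInf₂_le m hm).trans_lt ((iInf_le _ wstar).trans_lt ?_)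
        have hf : J_Q (m, wstar) ≠ ⊤ := by
          intro h'; rw [h', EReal.coe_ennreal_top] at h; exact not_top_lt h
        rw [ennreal_coe_eq hf] at h ⊢
        have : (J_Q (m, wstar)).toReal < c - 2 * wstar := by exact_mod_cast h
        exact_mod_cast (by linarith)
      obtain ⟨m', hm', w', hlt'⟩ := by simpa only [iInf_lt_iff, exists_prop] using hlt
      filter_upwards [factA P Q habs M hM B J_Q hLDP_Q m' hm' w' c hlt',
        eventually_ne_atTop 0] with n h hn
      have h := expRate_mono n h
      rw [expRate_exp n hn, EReal.coe_neg] at h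
      exact (EReal.neg_le.1 h).trans_lt hc2
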